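/- Let 0 ≤ i ≤ d, 𝒬(ξ) = −Σ_{j=1}^{i} ξ_j² + Σ_{j=i+1}^{d} ξ_j² on ℝ^d, let R_f > 0, and let μ : [0,∞) → ℝ be a smooth function satisfying μ(s) = μ₀ for s ≤ R_f² where μ₀ > 2R_f², μ(s) = 0 for s ≥ 5R_f², and −1 < μ′(s) ≤ 0 for all s. Set F(ξ) = 𝒬(ξ) − μ(‖ξ‖²) and a = −R_f². Then the set {ξ : 𝒬(ξ) ≤ a} ∪ {ξ : ‖ξ‖ ≤ R_f} is contained in {F ≤ a} and is a strong deformation retract of {F ≤ a}. -/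

import Mathlib

/-!
Write `ξ = (x, y)` with `x` the first `i` coordinates and `y` the remaining ones, and put
`p = ‖x‖²`, `q = ‖y‖²`, so that `𝒬(ξ) = q - p` and `‖ξ‖² = p + q`. At least one of the conditions
`q - p ≤ -R²` and `p + q ≤ R²` holds exactly when `q ≤ |p - R²|` (`mem_union_iff`). Hence the
smaller set meets each slice of constant `x` in a closed ball centred at `y = 0`, whose radius
`√|p - R²|` depends continuously on `x`. The retraction keeps `x` and sends
`y` to its nearest point in that ball, and the homotopy is the straight line to it
(`retractHomotopy`). It only shrinks `y`, so it stays in `{F ≤ a}` because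
`F` is nondecreasing in `q` for fixed `p`, `μ` being antitone (`Fmu_mono`).

The scaling factor `min(1, √|p - R²| / ‖y‖)` is discontinuous in general where `y = 0`, but there the
product of this factor with `y` is still continuous, as the factor is bounded by `1`
(`continuous_shrink_mul`).

The containment holds because `μ ≥ 0` everywhere, being antitone and eventually zero, so that
`F ≤ 𝒬`; and on the ball `F = 𝒬 - μ₀ ≤ R² - 2R² = -R²`.
-/

noncomputable section

/-- The diagonal quadratic form `𝒬(ξ) = −Σ_{j=1}^{i} ξ_j² + Σ_{j=i+1}^{d} ξ_j²` on `ℝ^d`. -/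
def Qdiag (d i : ℕ) (η : EuclideanSpace ℝ (Fin d)) : ℝ :=
  ∑ j : Fin d, if (j : ℕ) < i then -(η j ^ 2) else η j ^ 2

/-- The perturbed function `F(ξ) = 𝒬(ξ) − μ(‖ξ‖²)`. -/
def Fmu (d i : ℕ) (μ : ℝ → ℝ) (η : EuclideanSpace ℝ (Fin d)) : ℝ :=
  Qdiag d i η - μ (‖η‖ ^ 2)

/-- `‖x‖²`, where `x` consists of the first `i` coordinates of `ξ`. -/
def negSq (d i : ℕ) (ξ : EuclideanSpace ℝ (Fin d)) : ℝ :=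
  ∑ j : Fin d, if (j : ℕ) < i then ξ j ^ 2 else 0

/-- `‖y‖²`, where `y` consists of the coordinates of `ξ` after the first `i`. -/
def posSq (d i : ℕ) (ξ : EuclideanSpace ℝ (Fin d)) : ℝ :=
  ∑ j : Fin d, if (j : ℕ) < i then 0 else ξ j ^ 2

/-- The factor `min(1, √|p - R²| / √q)` which scales `y` to its nearest point in the ball of
radius `√|p - R²|`. At `q = 0` the division gives the value `0`, which is harmless because the
factor only ever multiplies coordinates of `y = 0`. -/
def shrink (d i : ℕ) (R : ℝ) (ξ : EuclideanSpace ℝ (Fin d)) : ℝ :=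
  min 1 (√|negSq d i ξ - R ^ 2| / √(posSq d i ξ))

/-- The straight-line homotopy from the identity to the map `(x, y) ↦ (x, shrink • y)`. -/
def retractHomotopy (d i : ℕ) (R : ℝ) (z : ℝ × EuclideanSpace ℝ (Fin d)) :
    EuclideanSpace ℝ (Fin d) :=
  WithLp.toLp 2 fun j : Fin d =>
    if (j : ℕ) < i then z.2 j else (1 - z.1) * z.2 j + z.1 * (shrink d i R z.2 * z.2 j)

section Coordinates

variable {d i : ℕ}

lemma Qdiag_eq (ξ : EuclideanSpace ℝ (Fin d)) :
    Qdiag d i ξ = posSq d i ξ - negSq d i ξ := by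
  unfold Qdiag posSq negSq
  rw [← Finset.sum_sub_distrib]
  refine Finset.sum_congr rfl fun j _ => ?_
  split_ifs <;> ring

lemma norm_sq_eq (ξ : EuclideanSpace ℝ (Fin d)) :
    ‖ξ‖ ^ 2 = negSq d i ξ + posSq d i ξ := by
  rw [EuclideanSpace.real_norm_sq_eq]
  unfold posSq negSq
  rw [← Finset.sum_add_distrib]
  refine Finset.sum_congr rfl fun j _ => ?_
  split_ifs <;> ring

lemma negSq_nonneg (ξ : EuclideanSpace ℝ (Fin d)) : 0 ≤ negSq d i ξ :=
  Finset.sum_nonneg fun j _ => by split_ifs <;> positivity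

lemma posSq_nonneg (ξ : EuclideanSpace ℝ (Fin d)) : 0 ≤ posSq d i ξ :=
  Finset.sum_nonneg fun j _ => by split_ifs <;> positivity

lemma continuous_negSq : Continuous (negSq d i) := by
  unfold negSq
  refine continuous_finsetSum _ fun j _ => ?_
  split_ifs <;> fun_prop

lemma continuous_posSq : Continuous (posSq d i) := by
  unfold posSq
  refine continuous_finsetSum _ fun j _ => ?_
  split_ifs <;> fun_prop

lemma coord_eq_zero {ξ : EuclideanSpace ℝ (Fin d)} (h : posSq d i ξ = 0) {j : Fin d}
    (hj : ¬ (j : ℕ) < i) : ξ j = 0 := by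
  have h0 := (Finset.sum_eq_zero_iff_of_nonneg
    (fun k _ => by split_ifs <;> positivity)).1 h j (Finset.mem_univ j)
  simpa [hj] using h0

lemma mem_union_iff {R : ℝ} (hR : 0 < R) (ξ : EuclideanSpace ℝ (Fin d)) :
    ξ ∈ ({ξ' : EuclideanSpace ℝ (Fin d) | Qdiag d i ξ' ≤ -R ^ 2} ∪ Metric.closedBall 0 R) ↔
      posSq d i ξ ≤ |negSq d i ξ - R ^ 2| := by
  rw [Set.mem_union, Set.mem_ofPred_eq, mem_closedBall_zero_iff,
    ← sq_le_sq₀ (norm_nonneg ξ) hR.le, norm_sq_eq (i := i), Qdiag_eq, le_abs]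
  constructor
  · rintro (h | h)
    · left; linarith
    · right; linarith
  · rintro (h | h)
    · left; linarith
    · right; linarith

lemma Fmu_mono {μ : ℝ → ℝ} (hμ : Antitone μ) {ξ η : EuclideanSpace ℝ (Fin d)}
    (hn : negSq d i ξ = negSq d i η) (hp : posSq d i ξ ≤ posSq d i η) :
    Fmu d i μ ξ ≤ Fmu d i μ η := by
  have h : μ (‖η‖ ^ 2) ≤ μ (‖ξ‖ ^ 2) := hμ (by
    rw [norm_sq_eq (i := i), norm_sq_eq (i := i)]; linarith)
  unfold Fmu
  rw [Qdiag_eq, Qdiag_eq]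
  linarith

end Coordinates

section Homotopy

variable {d i : ℕ} {R : ℝ}

lemma shrink_nonneg (ξ : EuclideanSpace ℝ (Fin d)) : 0 ≤ shrink d i R ξ :=
  le_min zero_le_one (by positivity)

lemma shrink_le_one (ξ : EuclideanSpace ℝ (Fin d)) : shrink d i R ξ ≤ 1 := min_le_left _ _

lemma continuous_shrink_mul {j : Fin d} (hj : ¬ (j : ℕ) < i) :
    Continuous fun ξ : EuclideanSpace ℝ (Fin d) => shrink d i R ξ * ξ j := by
  have hcoord : Continuous fun ξ : EuclideanSpace ℝ (Fin d) => ξ j := by fun_prop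
  rw [continuous_iff_continuousAt]
  intro ξ
  by_cases hq : posSq d i ξ = 0
  · have h0 : ξ j = 0 := coord_eq_zero hq hj
    have hlim : Filter.Tendsto (fun η : EuclideanSpace ℝ (Fin d) => |η j|) (nhds ξ) (nhds 0) := by
      simpa [h0] using (hcoord.abs).tendsto ξ
    rw [ContinuousAt, h0, mul_zero]
    refine squeeze_zero_norm (fun η => ?_) hlim
    rw [Real.norm_eq_abs, abs_mul, abs_of_nonneg (shrink_nonneg η)]
    exact mul_le_of_le_one_left (abs_nonneg _) (shrink_le_one η)
  · have hs : √(posSq d i ξ) ≠ 0 :=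
      (Real.sqrt_pos.2 (lt_of_le_of_ne (posSq_nonneg ξ) (Ne.symm hq))).ne'
    refine ContinuousAt.mul ?_ hcoord.continuousAt
    unfold shrink
    refine continuousAt_const.min (ContinuousAt.div ?_ ?_ hs)
    · exact (continuous_negSq.sub continuous_const).abs.sqrt.continuousAt
    · exact continuous_posSq.sqrt.continuousAt

lemma continuous_retractHomotopy : Continuous (retractHomotopy d i R) := by
  refine (PiLp.continuous_toLp 2 _).comp (continuous_pi fun j => ?_)
  split_ifs with hj
  · fun_prop
  · have h := (continuous_shrink_mul (R := R) hj).comp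
      (continuous_snd (X := ℝ) (Y := EuclideanSpace ℝ (Fin d)))
    exact Continuous.add (by fun_prop) (continuous_fst.mul h)

lemma negSq_retractHomotopy (t : ℝ) (ξ : EuclideanSpace ℝ (Fin d)) :
    negSq d i (retractHomotopy d i R (t, ξ)) = negSq d i ξ := by
  unfold negSq
  refine Finset.sum_congr rfl fun j _ => ?_
  split_ifs with hj
  · simp [retractHomotopy, hj]
  · rfl

lemma posSq_retractHomotopy (t : ℝ) (ξ : EuclideanSpace ℝ (Fin d)) :
    posSq d i (retractHomotopy d i R (t, ξ)) =
      (1 - t + t * shrink d i R ξ) ^ 2 * posSq d i ξ := by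
  unfold posSq
  rw [Finset.mul_sum]
  refine Finset.sum_congr rfl fun j _ => ?_
  split_ifs with hj
  · simp
  · simp only [retractHomotopy, hj, if_false]
    ring

lemma posSq_retractHomotopy_le {t : ℝ} (ht : t ∈ Set.Icc (0 : ℝ) 1)
    (ξ : EuclideanSpace ℝ (Fin d)) :
    posSq d i (retractHomotopy d i R (t, ξ)) ≤ posSq d i ξ := by
  rw [posSq_retractHomotopy]
  have h0 := mul_nonneg ht.1 (shrink_nonneg (i := i) (R := R) ξ)
  have h1 := mul_le_mul_of_nonneg_left (shrink_le_one (i := i) (R := R) ξ) ht.1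
  exact mul_le_of_le_one_left (posSq_nonneg ξ)
    (pow_le_one₀ (by linarith [ht.2]) (by linarith))

lemma shrink_sq_mul_le (ξ : EuclideanSpace ℝ (Fin d)) :
    shrink d i R ξ ^ 2 * posSq d i ξ ≤ |negSq d i ξ - R ^ 2| := by
  rcases (posSq_nonneg (i := i) ξ).eq_or_lt with hq | hq
  · rw [← hq, mul_zero]; positivity
  · have h : shrink d i R ξ ^ 2 ≤ (√|negSq d i ξ - R ^ 2| / √(posSq d i ξ)) ^ 2 :=
      pow_le_pow_left₀ (shrink_nonneg ξ) (min_le_right _ _) 2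
    rw [div_pow, Real.sq_sqrt (abs_nonneg _), Real.sq_sqrt hq.le] at h
    exact (le_div_iff₀ hq).1 h

lemma retractHomotopy_of_le {ξ : EuclideanSpace ℝ (Fin d)}
    (h : posSq d i ξ ≤ |negSq d i ξ - R ^ 2|) (t : ℝ) :
    retractHomotopy d i R (t, ξ) = ξ := by
  ext j
  by_cases hj : (j : ℕ) < i
  · simp [retractHomotopy, hj]
  · simp only [retractHomotopy, hj, if_false]
    rcases (posSq_nonneg (i := i) ξ).eq_or_lt with hq | hq
    · simp [coord_eq_zero hq.symm hj]
    · have hs : shrink d i R ξ = 1 :=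
        min_eq_left ((one_le_div (Real.sqrt_pos.2 hq)).2 (Real.sqrt_le_sqrt h))
      rw [hs]; ring

end Homotopy

/-- **`{𝒬 ≤ a} ∪ B(0,R_f)` is contained in `{F ≤ a}` and is a strong deformation
retract of `{F ≤ a}`**, with `a = −R_f²` and `F(ξ) = 𝒬(ξ) − μ(‖ξ‖²)` for a smooth bump
`μ` which equals `μ₀ > 2R_f²` on `(-∞, R_f²]`, vanishes on `[5R_f², ∞)`, and has
`−1 < μ′ ≤ 0`. -/
theorem Fmu_sublevel_retracts_onto_quadratic_part
    (d i : ℕ) (hi : i ≤ d) (Rf : ℝ) (hRf : 0 < Rf)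
    (μ : ℝ → ℝ) (hμ : ContDiff ℝ (⊤ : ℕ∞) μ)
    (μ₀ : ℝ) (hμ₀ : 2 * Rf ^ 2 < μ₀)
    (hμconst : ∀ s : ℝ, s ≤ Rf ^ 2 → μ s = μ₀)
    (hμzero : ∀ s : ℝ, 5 * Rf ^ 2 ≤ s → μ s = 0)
    (hμ' : ∀ s : ℝ, -1 < deriv μ s ∧ deriv μ s ≤ 0) :
    ({ξ : EuclideanSpace ℝ (Fin d) | Qdiag d i ξ ≤ -Rf ^ 2} ∪ Metric.closedBall 0 Rf
        ⊆ {ξ | Fmu d i μ ξ ≤ -Rf ^ 2}) ∧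
    ∃ H : ℝ × EuclideanSpace ℝ (Fin d) → EuclideanSpace ℝ (Fin d),
      ContinuousOn H (Set.Icc (0 : ℝ) 1 ×ˢ {ξ | Fmu d i μ ξ ≤ -Rf ^ 2}) ∧
      (∀ t ∈ Set.Icc (0 : ℝ) 1, ∀ ξ, Fmu d i μ ξ ≤ -Rf ^ 2 →
        Fmu d i μ (H (t, ξ)) ≤ -Rf ^ 2) ∧
      (∀ ξ, Fmu d i μ ξ ≤ -Rf ^ 2 → H (0, ξ) = ξ) ∧
      (∀ ξ, Fmu d i μ ξ ≤ -Rf ^ 2 →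
        H (1, ξ) ∈ ({ξ' : EuclideanSpace ℝ (Fin d) | Qdiag d i ξ' ≤ -Rf ^ 2}
          ∪ Metric.closedBall 0 Rf)) ∧
      (∀ t ∈ Set.Icc (0 : ℝ) 1,
        ∀ ξ ∈ ({ξ' : EuclideanSpace ℝ (Fin d) | Qdiag d i ξ' ≤ -Rf ^ 2}
          ∪ Metric.closedBall 0 Rf), H (t, ξ) = ξ) := by
  have hanti : Antitone μ :=
    antitone_of_deriv_nonpos (hμ.differentiable (by simp)) fun s => (hμ' s).2
  have hμnonneg : ∀ s, 0 ≤ μ s := fun s => by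
    rw [← hμzero (max s (5 * Rf ^ 2)) (le_max_right _ _)]
    exact hanti (le_max_left _ _)
  refine ⟨?_, retractHomotopy d i Rf, continuous_retractHomotopy.continuousOn, ?_, ?_, ?_, ?_⟩
  · rintro ξ (hξ | hξ)
    · have h1 : Qdiag d i ξ ≤ -Rf ^ 2 := hξ
      have h2 := hμnonneg (‖ξ‖ ^ 2)
      change Qdiag d i ξ - μ (‖ξ‖ ^ 2) ≤ -Rf ^ 2
      linarith
    · rw [mem_closedBall_zero_iff, ← sq_le_sq₀ (norm_nonneg ξ) hRf.le] at hξ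
      change Qdiag d i ξ - μ (‖ξ‖ ^ 2) ≤ -Rf ^ 2
      rw [hμconst _ hξ, Qdiag_eq]
      rw [norm_sq_eq (i := i)] at hξ
      linarith [negSq_nonneg (i := i) ξ]
  · intro t ht ξ hξ
    exact (Fmu_mono hanti (negSq_retractHomotopy t ξ) (posSq_retractHomotopy_le ht ξ)).trans hξ
  · intro ξ _
    ext j
    simp [retractHomotopy]
  · intro ξ _
    rw [mem_union_iff hRf, negSq_retractHomotopy, posSq_retractHomotopy, sub_self, zero_add,
      one_mul]
    exact shrink_sq_mul_le ξ
  · intro t _ ξ hξ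
    exact retractHomotopy_of_le ((mem_union_iff hRf ξ).1 hξ) t
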